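/- arXiv:1205.5875 — 3 statements merged into one kernel-verified Lean document; each statement's English description precedes it below -/
import Mathlib

section
/- Let H be a real Hilbert space and A : H → H a bounded linear monotone operator, i.e. ⟨Ax, x⟩ ≥ 0 for all x ∈ H. For λ > 0 let J_λ : H → H be the bounded linear operator with J_λ(x + λAx) = x and J_λ x + λA(J_λ x) = x for all x ∈ H (i.e. J_λ = (I + λA)⁻¹), and set A_λ := λ⁻¹(I − J_λ). Let λ, μ > 0, T > 0, let g : [0,T] → H be continuous, and let u, v : [0,T] → H be differentiable functions with u(0) = v(0) such that u′(t) = g(t) − A_λ u(t) and v′(t) = g(t) − A_μ v(t) for every t ∈ [0,T]. Then for every t ∈ [0,T]: ‖u(t) − v(t)‖² ≤ 4(λ + μ) ∫₀ᵗ ( ‖A_λ u(s)‖² + ‖A_μ v(s)‖² ) ds. -/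
open MeasureTheory Filter NormedSpace intervalIntegral
open scoped RealInnerProductSpace

/-!
Along the two flows the common forcing `g` cancels, so the derivative of `‖u - v‖ ^ 2` is
`-2 * ⟪u - v, a - b⟫` with `a = A_λ u` and `b = A_μ v`. Writing `u = J_λ u + λ a` and
`v = J_μ v + μ b`, monotonicity of `A` disposes of the contribution of `J_λ u - J_μ v`, and
completing squares bounds the remainder `-2 * ⟪λ a - μ b, a - b⟫` by `(μ ‖a‖ ^ 2 + λ ‖b‖ ^ 2) / 2`.
-/

section Resolvent

variable {H : Type*} [AddCommGroup H] [Module ℝ H]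

/-- The Yosida approximation `A_λ = λ⁻¹ (I - J)` belonging to a resolvent `J = (I + λ A)⁻¹`.
It is parametrized by `J`, so that it makes sense for multivalued `A`. -/
noncomputable def yosidaApprox (lam : ℝ) (J : H → H) (x : H) : H :=
  lam⁻¹ • (x - J x)

/-- `J` is the resolvent `(I + λ A)⁻¹`, defined on the whole space. The inclusion
`x ∈ J x + λ A (J x)` is written as `A_λ x ∈ A (J x)`; this is meant for `λ ≠ 0`. -/
def IsResolvent (A : H → Set H) (lam : ℝ) (J : H → H) : Prop :=
  ∀ x, yosidaApprox lam J x ∈ A (J x)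

theorem add_smul_yosidaApprox {lam : ℝ} (hlam : lam ≠ 0) (J : H → H) (x : H) :
    J x + lam • yosidaApprox lam J x = x := by
  rw [yosidaApprox, smul_inv_smul₀ hlam, add_sub_cancel]

theorem isResolvent_singleton {A J : H → H} {lam : ℝ} (hlam : lam ≠ 0)
    (hJ : ∀ x, J x + lam • A (J x) = x) : IsResolvent (fun x => {A x}) lam J := fun x => by
  rw [Set.mem_singleton_iff, yosidaApprox, inv_smul_eq_iff₀ hlam, sub_eq_iff_eq_add', hJ]

end Resolvent

section Monotone

variable {H : Type*} [NormedAddCommGroup H] [InnerProductSpace ℝ H]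

/-- Monotonicity of a possibly multivalued nonlinear operator on a real inner product space.
The operator is encoded by its sets of values, with `A x = ∅` for `x` outside the domain. -/
def IsMonotoneOperator (A : H → Set H) : Prop :=
  ∀ ⦃x y a b : H⦄, a ∈ A x → b ∈ A y → 0 ≤ ⟪x - y, a - b⟫

theorem isMonotoneOperator_singleton {F : Type*} [FunLike F H H] [AddMonoidHomClass F H H]
    {A : F} (hA : ∀ x, 0 ≤ ⟪A x, x⟫) : IsMonotoneOperator fun x => {A x} := by
  rintro x y _ _ rfl rfl
  rw [← map_sub, real_inner_comm]
  exact hA (x - y)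

namespace IsResolvent

variable {A : H → Set H} {lam : ℝ} {J : H → H}

theorem lipschitzWith_one (hJ : IsResolvent A lam J) (hA : IsMonotoneOperator A)
    (hlam : 0 < lam) : LipschitzWith 1 J := by
  refine LipschitzWith.mk_one fun x y => ?_
  rw [dist_eq_norm, dist_eq_norm]
  have hmono : 0 ≤ ⟪J x - J y, (x - y) - (J x - J y)⟫ := by
    have h := hA (hJ x) (hJ y)
    rw [yosidaApprox, yosidaApprox, ← smul_sub, real_inner_smul_right, sub_sub_sub_comm] at h
    exact nonneg_of_mul_nonneg_right h (inv_pos.2 hlam)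
  have hsq : ‖J x - J y‖ * ‖J x - J y‖ ≤ ‖J x - J y‖ * ‖x - y‖ := by
    rw [inner_sub_right, sub_nonneg, real_inner_self_eq_norm_mul_norm] at hmono
    exact hmono.trans (real_inner_le_norm _ _)
  by_contra! hlt
  exact hsq.not_gt (mul_lt_mul_of_pos_left hlt ((norm_nonneg _).trans_lt hlt))

theorem continuous_yosidaApprox (hJ : IsResolvent A lam J) (hA : IsMonotoneOperator A)
    (hlam : 0 < lam) : Continuous (yosidaApprox lam J) :=
  (continuous_id.sub (hJ.lipschitzWith_one hA hlam).continuous).const_smul lam⁻¹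

end IsResolvent

theorem neg_four_mul_inner_smul_sub_smul_le {lam mu : ℝ} (hlam : 0 ≤ lam) (hmu : 0 ≤ mu)
    (a b : H) :
    -(4 * ⟪lam • a - mu • b, a - b⟫) ≤ mu * ‖a‖ ^ 2 + lam * ‖b‖ ^ 2 := by
  have hsquares : mu * ‖a‖ ^ 2 + lam * ‖b‖ ^ 2 + 4 * ⟪lam • a - mu • b, a - b⟫ =
      lam * ‖(2 : ℝ) • a - b‖ ^ 2 + mu * ‖a - (2 : ℝ) • b‖ ^ 2 := by
    simp only [← real_inner_self_eq_norm_sq, inner_sub_left, inner_sub_right,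
      real_inner_smul_left, real_inner_smul_right, real_inner_comm a b]
    ring
  have hnonneg : 0 ≤ lam * ‖(2 : ℝ) • a - b‖ ^ 2 + mu * ‖a - (2 : ℝ) • b‖ ^ 2 := by positivity
  linarith

theorem IsMonotoneOperator.neg_four_mul_inner_yosidaApprox_sub_le {A : H → Set H}
    (hA : IsMonotoneOperator A) {lam mu : ℝ} (hlam : 0 < lam) (hmu : 0 < mu) {J K : H → H}
    (hJ : IsResolvent A lam J) (hK : IsResolvent A mu K) (x y : H) :
    -(4 * ⟪x - y, yosidaApprox lam J x - yosidaApprox mu K y⟫) ≤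
      mu * ‖yosidaApprox lam J x‖ ^ 2 + lam * ‖yosidaApprox mu K y‖ ^ 2 := by
  set a := yosidaApprox lam J x with ha
  set b := yosidaApprox mu K y with hb
  have hsplit : x - y = (J x - K y) + (lam • a - mu • b) := by
    rw [← add_sub_add_comm, ha, hb, add_smul_yosidaApprox hlam.ne', add_smul_yosidaApprox hmu.ne']
  have hmono : 0 ≤ ⟪J x - K y, a - b⟫ := hA (hJ x) (hK y)
  have hrest := neg_four_mul_inner_smul_sub_smul_le hlam.le hmu.le a b
  rw [hsplit, inner_add_left]
  linarith

theorem IsMonotoneOperator.two_mul_inner_neg_yosidaApprox_sub_le {A : H → Set H}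
    (hA : IsMonotoneOperator A) {lam mu : ℝ} (hlam : 0 < lam) (hmu : 0 < mu) {J K : H → H}
    (hJ : IsResolvent A lam J) (hK : IsResolvent A mu K) (x y : H) :
    2 * ⟪x - y, -(yosidaApprox lam J x - yosidaApprox mu K y)⟫ ≤
      max lam mu / 2 * (‖yosidaApprox lam J x‖ ^ 2 + ‖yosidaApprox mu K y‖ ^ 2) := by
  have hweighted := hA.neg_four_mul_inner_yosidaApprox_sub_le hlam hmu hJ hK x y
  have hJ_le := mul_le_mul_of_nonneg_right (le_max_right lam mu)
    (sq_nonneg ‖yosidaApprox lam J x‖)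
  have hK_le := mul_le_mul_of_nonneg_right (le_max_left lam mu)
    (sq_nonneg ‖yosidaApprox mu K y‖)
  rw [inner_neg_right]
  linarith

theorem norm_sq_sub_norm_sq_le_integral {w w' : ℝ → H} {φ : ℝ → ℝ} {a b : ℝ} (hab : a ≤ b)
    (hw : ContinuousOn w (Set.Icc a b))
    (hw' : ∀ s ∈ Set.Ioo a b, HasDerivWithinAt w (w' s) (Set.Ioi s) s)
    (hφ : IntegrableOn φ (Set.Icc a b)) (hle : ∀ s ∈ Set.Ioo a b, 2 * ⟪w s, w' s⟫ ≤ φ s) :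
    ‖w b‖ ^ 2 - ‖w a‖ ^ 2 ≤ ∫ s in a..b, φ s :=
  sub_le_integral_of_hasDeriv_right_of_le hab (hw.norm.pow 2)
    (fun s hs => (hw' s hs).norm_sq) hφ hle

theorem yosida_two_parameter_estimate_general {A : H → Set H} (hA : IsMonotoneOperator A)
    {lam mu : ℝ} (hlam : 0 < lam) (hmu : 0 < mu) {J K : H → H}
    (hJ : IsResolvent A lam J) (hK : IsResolvent A mu K) {t₀ T : ℝ} {g u v : ℝ → H}
    (hu : ∀ t ∈ Set.Icc t₀ T,
      HasDerivWithinAt u (g t - yosidaApprox lam J (u t)) (Set.Icc t₀ T) t)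
    (hv : ∀ t ∈ Set.Icc t₀ T,
      HasDerivWithinAt v (g t - yosidaApprox mu K (v t)) (Set.Icc t₀ T) t)
    {t : ℝ} (ht : t ∈ Set.Icc t₀ T) :
    ‖u t - v t‖ ^ 2 ≤ ‖u t₀ - v t₀‖ ^ 2 + max lam mu / 2 *
      ∫ s in t₀..t, (‖yosidaApprox lam J (u s)‖ ^ 2 + ‖yosidaApprox mu K (v s)‖ ^ 2) := by
  have hsub : Set.Icc t₀ t ⊆ Set.Icc t₀ T := Set.Icc_subset_Icc_right ht.2
  have hu_cont : ContinuousOn u (Set.Icc t₀ t) := (HasDerivWithinAt.continuousOn hu).mono hsub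
  have hv_cont : ContinuousOn v (Set.Icc t₀ t) := (HasDerivWithinAt.continuousOn hv).mono hsub
  have hJ_cont := (hJ.continuous_yosidaApprox hA hlam).comp_continuousOn hu_cont
  have hK_cont := (hK.continuous_yosidaApprox hA hmu).comp_continuousOn hv_cont
  have hderiv : ∀ s ∈ Set.Ioo t₀ t, HasDerivWithinAt (u - v)
      (-(yosidaApprox lam J (u s) - yosidaApprox mu K (v s))) (Set.Ioi s) s := fun s hs => by
    have hsT : s ∈ Set.Icc t₀ T := hsub (Set.Ioo_subset_Icc_self hs)
    have hnhds : Set.Icc t₀ T ∈ nhds s := Icc_mem_nhds hs.1 (hs.2.trans_le ht.2)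
    simpa only [sub_sub_sub_cancel_left, neg_sub] using
      (((hu s hsT).sub (hv s hsT)).hasDerivAt hnhds).hasDerivWithinAt
  have hintegrable := (((hJ_cont.norm.pow 2).add (hK_cont.norm.pow 2)).const_smul
    (max lam mu / 2)).integrableOn_Icc (μ := volume)
  rw [← intervalIntegral.integral_const_mul, ← sub_le_iff_le_add']
  exact norm_sq_sub_norm_sq_le_integral ht.1 (hu_cont.sub hv_cont) hderiv hintegrable
    fun s _ => hA.two_mul_inner_neg_yosidaApprox_sub_le hlam hmu hJ hK (u s) (v s)

end Monotone

/-- **Key deterministic estimate for Yosida-regularized equations.**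
Let `A` be a bounded linear monotone operator on a real Hilbert space `H`,
`λ, μ > 0`, and let `J_λ`, `J_μ` be the resolvents with Yosida approximations
`A_λ = λ⁻¹(I - J_λ)`, `A_μ = μ⁻¹(I - J_μ)`. If `g : [0,T] → H` is continuous
and `u, v : [0,T] → H` are differentiable with `u(0) = v(0)`,
`u' = g - A_λ u` and `v' = g - A_μ v` on `[0,T]`, then for every `t ∈ [0,T]`:
`‖u(t) - v(t)‖² ≤ 4 (λ + μ) ∫₀ᵗ (‖A_λ u(s)‖² + ‖A_μ v(s)‖²) ds`. -/
theorem yosida_two_parameter_estimate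
    {H : Type*} [NormedAddCommGroup H] [InnerProductSpace ℝ H] [CompleteSpace H]
    (A : H →L[ℝ] H)
    (hA : ∀ x : H, 0 ≤ ⟪A x, x⟫)
    (lam mu : ℝ) (hlam : 0 < lam) (hmu : 0 < mu)
    (Jl Jm : H →L[ℝ] H)
    (hJl₁ : ∀ x : H, Jl (x + lam • A x) = x)
    (hJl₂ : ∀ x : H, Jl x + lam • A (Jl x) = x)
    (hJm₁ : ∀ x : H, Jm (x + mu • A x) = x)
    (hJm₂ : ∀ x : H, Jm x + mu • A (Jm x) = x)
    (T : ℝ) (hT : 0 < T)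
    (g : ℝ → H) (hg : ContinuousOn g (Set.Icc 0 T))
    (u v : ℝ → H)
    (huv0 : u 0 = v 0)
    (hu : ∀ t ∈ Set.Icc (0:ℝ) T,
      HasDerivWithinAt u (g t - lam⁻¹ • (u t - Jl (u t))) (Set.Icc 0 T) t)
    (hv : ∀ t ∈ Set.Icc (0:ℝ) T,
      HasDerivWithinAt v (g t - mu⁻¹ • (v t - Jm (v t))) (Set.Icc 0 T) t)
    (t : ℝ) (ht : t ∈ Set.Icc (0:ℝ) T) :
    ‖u t - v t‖ ^ 2 ≤ 4 * (lam + mu) *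
      ∫ s in (0:ℝ)..t,
        (‖lam⁻¹ • (u s - Jl (u s))‖ ^ 2 + ‖mu⁻¹ • (v s - Jm (v s))‖ ^ 2) := by
  have hest := yosida_two_parameter_estimate_general (isMonotoneOperator_singleton hA) hlam hmu
    (isResolvent_singleton hlam.ne' hJl₂) (isResolvent_singleton hmu.ne' hJm₂) hu hv ht
  rw [huv0, sub_self, norm_zero, zero_pow two_ne_zero, zero_add] at hest
  refine hest.trans (mul_le_mul_of_nonneg_right ?_ (integral_nonneg ht.1 fun s _ => by positivity))
  linarith [max_le_add_of_nonneg hlam.le hmu.le]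
end

section
/- Let H be a real Hilbert space, T > 0, and let A, B : H → H be bounded linear operators with B monotone, i.e. ⟨Bx, x⟩ ≥ 0 for all x ∈ H. Let g : [0,T] → H be continuous and let u, v : [0,T] → H be differentiable with u(0) = v(0), u′(t) = g(t) − A u(t) and v′(t) = g(t) − B v(t) for every t ∈ [0,T]. Then for every t ∈ [0,T]: ‖u(t) − v(t)‖² ≤ e^T ∫₀ᵗ ‖A u(s) − B u(s)‖² ds. -/
open MeasureTheory Filter NormedSpace intervalIntegral
open scoped RealInnerProductSpace

/-! The squared distance `w = ‖u - v‖²` satisfies `w' = 2⟪u - v, u' - v'⟫`. Writing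
`A u - B v = (A u - B u) + (B u - B v)`, the second difference contributes with a favourable sign by
monotonicity of `B`, and the first is absorbed by Young's inequality, so that
`w' ≤ w + ‖A u - B u‖²`. Grönwall's inequality with an integrable source term concludes. -/

section Gronwall

variable {φ φ' ψ : ℝ → ℝ} {K a b : ℝ}

theorem le_exp_mul_add_integral_exp_mul_of_deriv_right_le (hab : a ≤ b)
    (hφ : ContinuousOn φ (Set.Icc a b))
    (hφ' : ∀ s ∈ Set.Ioo a b, HasDerivWithinAt φ (φ' s) (Set.Ioi s) s)
    (hψ : IntegrableOn ψ (Set.Icc a b))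
    (bound : ∀ s ∈ Set.Ioo a b, φ' s ≤ K * φ s + ψ s) :
    φ b ≤ Real.exp (K * (b - a)) * φ a + ∫ s in a..b, Real.exp (K * (b - s)) * ψ s := by
  have weight_deriv (s : ℝ) :
      HasDerivAt (fun r ↦ Real.exp (K * (b - r))) (Real.exp (K * (b - s)) * -K) s := by
    simpa using (((hasDerivAt_id s).const_sub b).const_mul K).exp
  have increment_le := sub_le_integral_of_hasDeriv_right_of_le
    (g := fun s ↦ Real.exp (K * (b - s)) * φ s) (φ := fun s ↦ Real.exp (K * (b - s)) * ψ s)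
    hab (by fun_prop) (fun s hs ↦ (weight_deriv s).hasDerivWithinAt.mul (hφ' s hs))
    (hψ.continuousOn_mul (by fun_prop) isCompact_Icc) fun s hs ↦
      calc Real.exp (K * (b - s)) * -K * φ s + Real.exp (K * (b - s)) * φ' s
          = Real.exp (K * (b - s)) * (φ' s - K * φ s) := by ring
        _ ≤ Real.exp (K * (b - s)) * ψ s := by
          gcongr
          exact sub_le_iff_le_add'.mpr (bound s hs)
  simpa only [sub_self, mul_zero, Real.exp_zero, one_mul, sub_le_iff_le_add'] using increment_le

theorem integral_exp_mul_le_exp_mul_integral (hK : 0 ≤ K) (hab : a ≤ b)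
    (hψ : IntegrableOn ψ (Set.Icc a b)) (hψ_nonneg : ∀ s ∈ Set.Icc a b, 0 ≤ ψ s) :
    ∫ s in a..b, Real.exp (K * (b - s)) * ψ s ≤ Real.exp (K * (b - a)) * ∫ s in a..b, ψ s := by
  have hψ_int : IntervalIntegrable ψ volume a b :=
    (intervalIntegrable_iff_integrableOn_Icc_of_le hab).mpr hψ
  rw [← intervalIntegral.integral_const_mul]
  refine integral_mono_on hab (hψ_int.continuousOn_mul (by fun_prop)) (hψ_int.const_mul _)
    fun s hs ↦ ?_
  have hψs : 0 ≤ ψ s := hψ_nonneg s hs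
  gcongr
  exact hs.1

theorem le_exp_mul_add_integral_of_deriv_right_le (hK : 0 ≤ K) (hab : a ≤ b)
    (hφ : ContinuousOn φ (Set.Icc a b))
    (hφ' : ∀ s ∈ Set.Ioo a b, HasDerivWithinAt φ (φ' s) (Set.Ioi s) s)
    (hψ : IntegrableOn ψ (Set.Icc a b)) (hψ_nonneg : ∀ s ∈ Set.Icc a b, 0 ≤ ψ s)
    (bound : ∀ s ∈ Set.Ioo a b, φ' s ≤ K * φ s + ψ s) :
    φ b ≤ Real.exp (K * (b - a)) * (φ a + ∫ s in a..b, ψ s) :=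
  calc φ b
      ≤ Real.exp (K * (b - a)) * φ a + ∫ s in a..b, Real.exp (K * (b - s)) * ψ s :=
        le_exp_mul_add_integral_exp_mul_of_deriv_right_le hab hφ hφ' hψ bound
    _ ≤ Real.exp (K * (b - a)) * φ a + Real.exp (K * (b - a)) * ∫ s in a..b, ψ s := by
        gcongr
        exact integral_exp_mul_le_exp_mul_integral hK hab hψ hψ_nonneg
    _ = Real.exp (K * (b - a)) * (φ a + ∫ s in a..b, ψ s) := (mul_add _ _ _).symm

end Gronwall

section Comparison

variable {H : Type*} [NormedAddCommGroup H] [InnerProductSpace ℝ H]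

theorem two_mul_inner_le_norm_sq_add_norm_sq (x y : H) : 2 * ⟪x, y⟫ ≤ ‖x‖ ^ 2 + ‖y‖ ^ 2 := by
  linarith [norm_sub_sq_real x y, sq_nonneg ‖x - y‖]

theorem two_mul_inner_sub_le_of_inner_nonneg {d p q r : H} (h : 0 ≤ ⟪q - r, d⟫) :
    2 * ⟪d, r - p⟫ ≤ ‖d‖ ^ 2 + ‖p - q‖ ^ 2 :=
  calc 2 * ⟪d, r - p⟫
      = 2 * ⟪d, q - p⟫ - 2 * ⟪q - r, d⟫ := by
        rw [real_inner_comm d (q - r), ← mul_sub, ← inner_sub_right, sub_sub_sub_cancel_left]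
    _ ≤ 2 * ⟪d, q - p⟫ := by linarith
    _ ≤ ‖d‖ ^ 2 + ‖p - q‖ ^ 2 := by
        rw [norm_sub_rev p q]
        exact two_mul_inner_le_norm_sq_add_norm_sq d (q - p)

theorem comparison_estimate_two_generators_general {a b t : ℝ} {A B : H → H}
    (hB : ∀ x y, 0 ≤ ⟪B x - B y, x - y⟫) {g u v : ℝ → H}
    (hu : ∀ s ∈ Set.Icc a b, HasDerivWithinAt u (g s - A (u s)) (Set.Icc a b) s)
    (hv : ∀ s ∈ Set.Icc a b, HasDerivWithinAt v (g s - B (v s)) (Set.Icc a b) s)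
    (hAB : IntegrableOn (fun s ↦ ‖A (u s) - B (u s)‖ ^ 2) (Set.Icc a b))
    (ht : t ∈ Set.Icc a b) :
    ‖u t - v t‖ ^ 2 ≤
      Real.exp (t - a) * (‖u a - v a‖ ^ 2 + ∫ s in a..t, ‖A (u s) - B (u s)‖ ^ 2) := by
  have hsub : Set.Icc a t ⊆ Set.Icc a b := Set.Icc_subset_Icc_right ht.2
  have sq_dist_deriv (s : ℝ) (hs : s ∈ Set.Icc a t) :
      HasDerivWithinAt (fun r ↦ ‖u r - v r‖ ^ 2) (2 * ⟪u s - v s, B (v s) - A (u s)⟫)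
        (Set.Icc a t) s := by
    simpa only [Pi.sub_apply, sub_sub_sub_cancel_left] using
      (((hu s (hsub hs)).sub (hv s (hsub hs))).mono hsub).norm_sq
  have gronwall := le_exp_mul_add_integral_of_deriv_right_le (K := 1) (φ := fun s ↦ ‖u s - v s‖ ^ 2)
    zero_le_one ht.1 (fun s hs ↦ (sq_dist_deriv s hs).continuousWithinAt)
    (fun s hs ↦ ((sq_dist_deriv s (Set.Ioo_subset_Icc_self hs)).hasDerivAt
      (Icc_mem_nhds hs.1 hs.2)).hasDerivWithinAt)
    (hAB.mono_set hsub) (fun s _ ↦ sq_nonneg _) fun s _ ↦ by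
      simpa only [one_mul] using two_mul_inner_sub_le_of_inner_nonneg (hB (u s) (v s))
  simpa only [one_mul] using gronwall

end Comparison

/-- **Deterministic comparison estimate for two generators.**
Let `A, B` be bounded linear operators on a real Hilbert space `H` with `B`
monotone (`⟪B x, x⟫ ≥ 0`). If `g : [0,T] → H` is continuous and
`u, v : [0,T] → H` are differentiable with `u(0) = v(0)`, `u' = g - A u` and
`v' = g - B v` on `[0,T]`, then for every `t ∈ [0,T]`:
`‖u(t) - v(t)‖² ≤ e^T ∫₀ᵗ ‖A u(s) - B u(s)‖² ds`. -/
theorem comparison_estimate_two_generators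
    {H : Type*} [NormedAddCommGroup H] [InnerProductSpace ℝ H] [CompleteSpace H]
    (T : ℝ) (hT : 0 < T)
    (A B : H →L[ℝ] H)
    (hB : ∀ x : H, 0 ≤ ⟪B x, x⟫)
    (g : ℝ → H) (hg : ContinuousOn g (Set.Icc 0 T))
    (u v : ℝ → H)
    (huv0 : u 0 = v 0)
    (hu : ∀ t ∈ Set.Icc (0:ℝ) T,
      HasDerivWithinAt u (g t - A (u t)) (Set.Icc 0 T) t)
    (hv : ∀ t ∈ Set.Icc (0:ℝ) T,
      HasDerivWithinAt v (g t - B (v t)) (Set.Icc 0 T) t)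
    (t : ℝ) (ht : t ∈ Set.Icc (0:ℝ) T) :
    ‖u t - v t‖ ^ 2 ≤ Real.exp T * ∫ s in (0:ℝ)..t, ‖A (u s) - B (u s)‖ ^ 2 := by
  have hu_cont : ContinuousOn u (Set.Icc 0 T) := fun s hs ↦ (hu s hs).continuousWithinAt
  have hAB : ContinuousOn (fun s ↦ ‖A (u s) - B (u s)‖ ^ 2) (Set.Icc 0 T) := by fun_prop
  calc ‖u t - v t‖ ^ 2
      ≤ Real.exp t * ∫ s in (0:ℝ)..t, ‖A (u s) - B (u s)‖ ^ 2 := by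
        simpa [huv0] using comparison_estimate_two_generators_general
          (fun x y ↦ map_sub B x y ▸ hB (x - y)) hu hv hAB.integrableOn_Icc ht
    _ ≤ Real.exp T * ∫ s in (0:ℝ)..t, ‖A (u s) - B (u s)‖ ^ 2 := by
        gcongr
        · exact integral_nonneg ht.1 fun s _ ↦ sq_nonneg _
        · exact ht.2
end

section
/- Let H be a real Hilbert space, T > 0 and p ∈ [2, ∞). Then there exists a constant N > 0, depending only on T and p, with the following property: for all bounded linear operators A, B : H → H with B monotone (⟨Bx, x⟩ ≥ 0 for all x ∈ H), every continuous g : [0,T] → H, and all differentiable u, v : [0,T] → H with u(0) = v(0), u′(t) = g(t) − A u(t) and v′(t) = g(t) − B v(t) for every t ∈ [0,T], one has for every t ∈ [0,T]: ‖u(t) − v(t)‖^p ≤ N ∫₀ᵗ ‖A u(s) − B u(s)‖^p ds. -/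
open MeasureTheory Filter NormedSpace intervalIntegral
open scoped RealInnerProductSpace

/-!
Since `B` is monotone, `w = u - v` satisfies `⟪w, w'⟫ ≤ ‖w‖ ‖A u - B u‖`. Dividing by `‖w‖`, which
is made rigorous by replacing `‖w‖` with `√(‖w‖² + ε²)`, gives `‖w t‖ ≤ ∫₀ᵗ ‖A u - B u‖`, and
Jensen's inequality for `x ↦ x ^ p` yields the estimate with `N = T ^ (p - 1)`, without Gronwall.
-/

theorem integral_norm_rpow_le_measureReal_univ_rpow_mul {α E : Type*} [MeasurableSpace α]
    {μ : Measure α} [IsFiniteMeasure μ] [NormedAddCommGroup E] {p : ℝ} (hp : 1 ≤ p) {f : α → E}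
    (hf : MemLp f (ENNReal.ofReal p) μ) :
    (∫ x, ‖f x‖ ∂μ) ^ p ≤ μ.real Set.univ ^ (p - 1) * ∫ x, ‖f x‖ ^ p ∂μ := by
  have hp0 : 0 < p := by linarith
  obtain rfl | hμ := eq_or_ne μ 0
  · simp [Real.zero_rpow hp0.ne']
  have : NeZero μ := ⟨hμ⟩
  have hint : Integrable (fun x => ‖f x‖) μ :=
    (hf.integrable (ENNReal.one_le_ofReal.2 hp)).norm
  have hint_rpow : Integrable (fun x => ‖f x‖ ^ p) μ := by
    simpa only [ENNReal.toReal_ofReal hp0.le] using hf.integrable_norm_rpow'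
  have jensen : (⨍ x, ‖f x‖ ∂μ) ^ p ≤ ⨍ x, ‖f x‖ ^ p ∂μ :=
    (convexOn_rpow hp).map_average_le (Real.continuous_rpow_const hp0.le).continuousOn
      isClosed_Ici (ae_of_all _ fun _ => norm_nonneg _) hint hint_rpow
  have hm : 0 < μ.real Set.univ := measureReal_univ_pos
  have havg : 0 ≤ ⨍ x, ‖f x‖ ∂μ := integral_nonneg fun _ => norm_nonneg _
  calc (∫ x, ‖f x‖ ∂μ) ^ p
      = μ.real Set.univ ^ p * (⨍ x, ‖f x‖ ∂μ) ^ p := by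
        rw [← measure_smul_average μ, smul_eq_mul, Real.mul_rpow hm.le havg]
    _ ≤ μ.real Set.univ ^ p * ⨍ x, ‖f x‖ ^ p ∂μ := by gcongr
    _ = μ.real Set.univ ^ (p - 1) * ∫ x, ‖f x‖ ^ p ∂μ := by
        rw [← measure_smul_average μ (fun x => ‖f x‖ ^ p), smul_eq_mul, ← mul_assoc,
          Real.rpow_sub_one hm.ne', div_mul_cancel₀ _ hm.ne']

theorem intervalIntegral_norm_rpow_le_sub_rpow_mul {E : Type*} [NormedAddCommGroup E] {a b p : ℝ}
    (hab : a ≤ b) (hp : 1 ≤ p) {f : ℝ → E}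
    (hf : MemLp f (ENNReal.ofReal p) (volume.restrict (Set.Icc a b))) :
    (∫ s in a..b, ‖f s‖) ^ p ≤ (b - a) ^ (p - 1) * ∫ s in a..b, ‖f s‖ ^ p := by
  simpa [integral_of_le hab, ← integral_Icc_eq_integral_Ioc, hab] using
    integral_norm_rpow_le_measureReal_univ_rpow_mul hp hf

theorem memLp_restrict_of_continuousOn_of_isCompact {X E : Type*} [TopologicalSpace X]
    [MeasurableSpace X] [OpensMeasurableSpace X] [NormedAddCommGroup E] {μ : Measure X}
    [IsFiniteMeasureOnCompacts μ] {K : Set X} (hK : IsCompact K) (hKm : MeasurableSet K) {f : X → E}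
    (hf : ContinuousOn f K) (p : ENNReal) :
    MemLp f p (μ.restrict K) := by
  obtain ⟨C, hC⟩ := hK.exists_bound_of_continuousOn hf
  have : IsFiniteMeasure (μ.restrict K) := isFiniteMeasure_restrict.2 hK.measure_ne_top
  exact MemLp.of_bound (hf.aestronglyMeasurable_of_isCompact hK hKm) C
    (ae_restrict_of_forall_mem hKm hC)

section InnerProductSpace

variable {H : Type*} [NormedAddCommGroup H] [InnerProductSpace ℝ H]

theorem sqrt_norm_sq_add_sq_le_add_integral_of_inner_le {a b ε : ℝ} (hab : a ≤ b) (hε : 0 < ε)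
    {w w' : ℝ → H} {f : ℝ → ℝ} (hw : ContinuousOn w (Set.Icc a b))
    (hw' : ∀ s ∈ Set.Ioo a b, HasDerivWithinAt w (w' s) (Set.Ioi s) s)
    (hf : IntegrableOn f (Set.Icc a b)) (hf0 : ∀ s ∈ Set.Ioo a b, 0 ≤ f s)
    (hle : ∀ s ∈ Set.Ioo a b, ⟪w s, w' s⟫ ≤ ‖w s‖ * f s) :
    √(‖w b‖ ^ 2 + ε ^ 2) ≤ √(‖w a‖ ^ 2 + ε ^ 2) + ∫ s in a..b, f s := by
  rw [← sub_le_iff_le_add']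
  refine sub_le_integral_of_hasDeriv_right_of_le hab (by fun_prop)
    (fun s hs => ((hw' s hs).norm_sq.add_const (ε ^ 2)).sqrt (by positivity)) hf fun s hs => ?_
  have norm_le : ‖w s‖ ≤ √(‖w s‖ ^ 2 + ε ^ 2) :=
    Real.le_sqrt_of_sq_le (le_add_of_nonneg_right (sq_nonneg ε))
  rw [mul_div_mul_left _ _ two_ne_zero, div_le_iff₀ (by positivity), mul_comm]
  exact (hle s hs).trans (mul_le_mul_of_nonneg_right norm_le (hf0 s hs))

theorem norm_le_norm_add_integral_of_inner_le {a b : ℝ} (hab : a ≤ b)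
    {w w' : ℝ → H} {f : ℝ → ℝ} (hw : ContinuousOn w (Set.Icc a b))
    (hw' : ∀ s ∈ Set.Ioo a b, HasDerivWithinAt w (w' s) (Set.Ioi s) s)
    (hf : IntegrableOn f (Set.Icc a b)) (hf0 : ∀ s ∈ Set.Ioo a b, 0 ≤ f s)
    (hle : ∀ s ∈ Set.Ioo a b, ⟪w s, w' s⟫ ≤ ‖w s‖ * f s) :
    ‖w b‖ ≤ ‖w a‖ + ∫ s in a..b, f s := by
  refine le_of_forall_pos_le_add fun ε hε => ?_
  calc ‖w b‖ ≤ √(‖w b‖ ^ 2 + ε ^ 2) := Real.le_sqrt_of_sq_le (le_add_of_nonneg_right (sq_nonneg ε))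
    _ ≤ √(‖w a‖ ^ 2 + ε ^ 2) + ∫ s in a..b, f s :=
        sqrt_norm_sq_add_sq_le_add_integral_of_inner_le hab hε hw hw' hf hf0 hle
    _ ≤ (‖w a‖ + ε) + ∫ s in a..b, f s := by
        gcongr
        exact Real.sqrt_le_iff.2 ⟨by positivity, by nlinarith [norm_nonneg (w a)]⟩
    _ = ‖w a‖ + (∫ s in a..b, f s) + ε := by ring

theorem inner_sub_sub_le_norm_mul_norm_of_inner_nonneg {A B : H → H} {x y : H}
    (hB : 0 ≤ ⟪B x - B y, x - y⟫) (z : H) :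
    ⟪x - y, (z - A x) - (z - B y)⟫ ≤ ‖x - y‖ * ‖A x - B x‖ := by
  calc ⟪x - y, (z - A x) - (z - B y)⟫
      = ⟪x - y, -(A x - B x)⟫ - ⟪B x - B y, x - y⟫ := by
        rw [real_inner_comm (x - y) (B x - B y), ← inner_sub_right]
        congr 1
        abel
    _ ≤ ⟪x - y, -(A x - B x)⟫ := sub_le_self _ hB
    _ ≤ ‖x - y‖ * ‖A x - B x‖ := norm_neg (A x - B x) ▸ real_inner_le_norm _ _

theorem norm_sub_le_norm_sub_add_integral_of_monotone {a b : ℝ} (hab : a ≤ b) {A B : H → H}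
    (hB : ∀ x y, 0 ≤ ⟪B x - B y, x - y⟫) {g u v : ℝ → H}
    (hu : ContinuousOn u (Set.Icc a b)) (hv : ContinuousOn v (Set.Icc a b))
    (hu' : ∀ s ∈ Set.Ioo a b, HasDerivWithinAt u (g s - A (u s)) (Set.Ioi s) s)
    (hv' : ∀ s ∈ Set.Ioo a b, HasDerivWithinAt v (g s - B (v s)) (Set.Ioi s) s)
    (hAB : IntegrableOn (fun s => A (u s) - B (u s)) (Set.Icc a b)) :
    ‖u b - v b‖ ≤ ‖u a - v a‖ + ∫ s in a..b, ‖A (u s) - B (u s)‖ :=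
  norm_le_norm_add_integral_of_inner_le hab (hu.sub hv)
    (fun s hs => (hu' s hs).sub (hv' s hs)) hAB.norm (fun _ _ => norm_nonneg _)
    fun s _ => inner_sub_sub_le_norm_mul_norm_of_inner_nonneg (hB (u s) (v s)) (g s)

theorem comparison_estimate_two_generators_pow_general {T p : ℝ} (hp : 1 ≤ p) {A B : H → H}
    (hAB : Continuous fun x => A x - B x) (hB : ∀ x y, 0 ≤ ⟪B x - B y, x - y⟫)
    {g u v : ℝ → H} (huv : u 0 = v 0)
    (hu : ∀ t ∈ Set.Icc 0 T, HasDerivWithinAt u (g t - A (u t)) (Set.Icc 0 T) t)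
    (hv : ∀ t ∈ Set.Icc 0 T, HasDerivWithinAt v (g t - B (v t)) (Set.Icc 0 T) t)
    {t : ℝ} (ht : t ∈ Set.Icc 0 T) :
    ‖u t - v t‖ ^ p ≤ T ^ (p - 1) * ∫ s in (0:ℝ)..t, ‖A (u s) - B (u s)‖ ^ p := by
  have hsub : Set.Icc 0 t ⊆ Set.Icc 0 T := Set.Icc_subset_Icc_right ht.2
  have hmem : ∀ s ∈ Set.Ioo 0 t, s ∈ Set.Icc 0 T := fun s hs => hsub (Set.Ioo_subset_Icc_self hs)
  have hnhds : ∀ s ∈ Set.Ioo 0 t, Set.Icc 0 T ∈ nhdsWithin s (Set.Ioi s) := fun s hs =>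
    Icc_mem_nhdsGT_of_mem ⟨hs.1.le, hs.2.trans_le ht.2⟩
  have huc : ContinuousOn u (Set.Icc 0 t) := (HasDerivWithinAt.continuousOn hu).mono hsub
  have hvc : ContinuousOn v (Set.Icc 0 t) := (HasDerivWithinAt.continuousOn hv).mono hsub
  have hresidual : ContinuousOn (fun s => A (u s) - B (u s)) (Set.Icc 0 t) :=
    hAB.comp_continuousOn huc
  have hnorm : ‖u t - v t‖ ≤ ∫ s in (0:ℝ)..t, ‖A (u s) - B (u s)‖ := by
    simpa [huv] using norm_sub_le_norm_sub_add_integral_of_monotone ht.1 hB huc hvc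
      (fun s hs => (hu s (hmem s hs)).mono_of_mem_nhdsWithin (hnhds s hs))
      (fun s hs => (hv s (hmem s hs)).mono_of_mem_nhdsWithin (hnhds s hs))
      hresidual.integrableOn_Icc
  have hint : 0 ≤ ∫ s in (0:ℝ)..t, ‖A (u s) - B (u s)‖ ^ p :=
    integral_nonneg ht.1 fun _ _ => by positivity
  calc ‖u t - v t‖ ^ p
      ≤ (∫ s in (0:ℝ)..t, ‖A (u s) - B (u s)‖) ^ p := by gcongr
    _ ≤ (t - 0) ^ (p - 1) * ∫ s in (0:ℝ)..t, ‖A (u s) - B (u s)‖ ^ p :=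
        intervalIntegral_norm_rpow_le_sub_rpow_mul ht.1 hp
          (memLp_restrict_of_continuousOn_of_isCompact isCompact_Icc measurableSet_Icc hresidual _)
    _ ≤ T ^ (p - 1) * ∫ s in (0:ℝ)..t, ‖A (u s) - B (u s)‖ ^ p := by
        have : 0 ≤ p - 1 := sub_nonneg.2 hp
        rw [sub_zero]
        gcongr
        exacts [ht.1, ht.2]

end InnerProductSpace

/-- **`L^p` deterministic comparison estimate for two generators.**
Let `H` be a real Hilbert space, `T > 0` and `p ∈ [2, ∞)`. There is a constant
`N > 0` (depending only on `T` and `p`) such that for all bounded linear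
operators `A, B` on `H` with `B` monotone, every continuous `g : [0,T] → H`,
and all differentiable `u, v : [0,T] → H` with `u(0) = v(0)`, `u' = g - A u`
and `v' = g - B v` on `[0,T]`, one has for every `t ∈ [0,T]`:
`‖u(t) - v(t)‖^p ≤ N ∫₀ᵗ ‖A u(s) - B u(s)‖^p ds`. -/
theorem comparison_estimate_two_generators_pow
    {H : Type*} [NormedAddCommGroup H] [InnerProductSpace ℝ H] [CompleteSpace H]
    (T : ℝ) (hT : 0 < T)
    (p : ℝ) (hp : 2 ≤ p) :
    ∃ N : ℝ, 0 < N ∧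
      ∀ (A B : H →L[ℝ] H), (∀ x : H, 0 ≤ ⟪B x, x⟫) →
      ∀ (g : ℝ → H), ContinuousOn g (Set.Icc 0 T) →
      ∀ (u v : ℝ → H), u 0 = v 0 →
        (∀ t ∈ Set.Icc (0:ℝ) T,
          HasDerivWithinAt u (g t - A (u t)) (Set.Icc 0 T) t) →
        (∀ t ∈ Set.Icc (0:ℝ) T,
          HasDerivWithinAt v (g t - B (v t)) (Set.Icc 0 T) t) →
      ∀ t ∈ Set.Icc (0:ℝ) T,
        ‖u t - v t‖ ^ p ≤ N * ∫ s in (0:ℝ)..t, ‖A (u s) - B (u s)‖ ^ p :=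
  ⟨T ^ (p - 1), Real.rpow_pos_of_pos hT _, fun A B hB _ _ _ _ huv hu hv _ ht =>
    comparison_estimate_two_generators_pow_general (A := A) (B := B) (by linarith)
      (A - B).continuous (fun x y => by simpa only [map_sub] using hB (x - y)) huv hu hv ht⟩
end
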